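/- arXiv:0805.4801 — 2 statements merged into one kernel-verified Lean document; each statement's English description precedes it below -/
import Mathlib

section
/- For every integer n ≥ 4 there exist a unital C*-algebra A and an n×n magic unitary u = (u_ij) over A such that the entries u_ij do not all commute and the C*-subalgebra of A generated by the entries u_ij is infinite-dimensional. -/
/-- A witness for Statement 3: a unital C*-algebra `A` together with an `n × n`
magic unitary over `A` whose entries do not all commute, and such that the
C*-subalgebra of `A` generated by the entries (the topological closure of the
star subalgebra they generate) is infinite-dimensional. -/
structure NoncommutativeMagicUnitaryWitness (n : ℕ) where
  A : Type
  [inst : CStarAlgebra A]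
  u : Fin n → Fin n → A
  proj : ∀ i j, star (u i j) = u i j ∧ u i j * u i j = u i j
  rows : ∀ i, ∑ j, u i j = 1
  cols : ∀ j, ∑ i, u i j = 1
  noncomm : ¬ ∀ i j k l, Commute (u i j) (u k l)
  infdim : ¬ FiniteDimensional ℂ
    ((StarAlgebra.adjoin ℂ {x : A | ∃ i j, x = u i j}).topologicalClosure)

open scoped ComplexOrder

noncomputable section

abbrev MUAlg : Type := CStarMatrix (Fin 2) (Fin 2) C(Set.Icc (0:ℝ) 1, ℂ)

def muC : C(Set.Icc (0:ℝ) 1, ℂ) := ⟨fun t => ((t:ℝ):ℂ), by fun_prop⟩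
def muS : C(Set.Icc (0:ℝ) 1, ℂ) := ⟨fun t => ((Real.sqrt (1 - (t:ℝ)^2) : ℝ):ℂ), by fun_prop⟩

theorem muC_star : star muC = muC := by ext t; simp [muC]
theorem muS_star : star muS = muS := by ext t; simp [muS]
theorem mu_sq : muC * muC + muS * muS = 1 := by
  ext t
  have h : (0:ℝ) ≤ 1 - (t:ℝ)^2 := by nlinarith [t.2.1, t.2.2]
  have h2 := Real.mul_self_sqrt h
  simp only [muC, muS, ContinuousMap.add_apply, ContinuousMap.mul_apply, ContinuousMap.coe_mk,
    ContinuousMap.one_apply]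
  rw [← Complex.ofReal_mul, ← Complex.ofReal_mul, h2]
  push_cast
  ring

def muP : MUAlg := CStarMatrix.ofMatrix !![1, 0; 0, 0]
def muQ : MUAlg := CStarMatrix.ofMatrix !![muC * muC, muC * muS; muC * muS, muS * muS]

theorem muP_star : star muP = muP := by
  ext i j : 2
  rw [CStarMatrix.star_apply]
  fin_cases i <;> fin_cases j <;> simp [muP]
theorem muQ_star : star muQ = muQ := by
  ext i j : 2
  rw [CStarMatrix.star_apply]
  fin_cases i <;> fin_cases j <;> simp [muQ, muC_star, muS_star]
theorem muP_sq : muP * muP = muP := by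
  ext i j : 2
  rw [CStarMatrix.mul_apply]
  fin_cases i <;> fin_cases j <;> simp [muP]
theorem mu_ring1 {R : Type} [CommRing R] (a b : R) (h : a * a + b * b = 1) :
    a * a * (a * a) + a * b * (a * b) = a * a := by linear_combination (a * a) * h
theorem mu_ring2 {R : Type} [CommRing R] (a b : R) (h : a * a + b * b = 1) :
    a * a * (a * b) + a * b * (b * b) = a * b := by linear_combination (a * b) * h
theorem mu_ring3 {R : Type} [CommRing R] (a b : R) (h : a * a + b * b = 1) :
    a * b * (a * a) + b * b * (a * b) = a * b := by linear_combination (a * b) * h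
theorem mu_ring4 {R : Type} [CommRing R] (a b : R) (h : a * a + b * b = 1) :
    a * b * (a * b) + b * b * (b * b) = b * b := by linear_combination (b * b) * h
theorem mu_star_one : star (1 : MUAlg) = 1 := star_one MUAlg
theorem muQ_sq : muQ * muQ = muQ := by
  have h := mu_sq
  ext i j : 2
  rw [CStarMatrix.mul_apply]
  fin_cases i <;> fin_cases j <;> simp [muQ]
  · exact mu_ring1 _ _ (DFunLike.congr_fun h _)
  · exact mu_ring2 _ _ (DFunLike.congr_fun h _)
  · exact mu_ring3 _ _ (DFunLike.congr_fun h _)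
  · exact mu_ring4 _ _ (DFunLike.congr_fun h _)

theorem muPQ_ne : ¬ Commute muP muQ := by
  intro h
  have h1 : (muP * muQ) 0 1 = (muQ * muP) 0 1 := by rw [h.eq]
  rw [CStarMatrix.mul_apply, CStarMatrix.mul_apply] at h1
  simp [muP, muQ] at h1
  have h2 := DFunLike.congr_fun h1 (⟨1/2, by norm_num, by norm_num⟩ : Set.Icc (0:ℝ) 1)
  simp [muC, muS] at h2
  rw [Real.sqrt_eq_zero'] at h2
  norm_num at h2

theorem muPQP_pow (k : ℕ) : ((muP * muQ * muP) ^ k) 0 0 = (muC * muC) ^ k ∧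
    ((muP * muQ * muP) ^ k) 0 1 = 0 := by
  induction k with
  | zero => simp
  | succ k ih =>
    rw [pow_succ, CStarMatrix.mul_apply, CStarMatrix.mul_apply]
    simp only [Fin.sum_univ_two, ih.1, ih.2]
    constructor <;> simp [CStarMatrix.mul_apply, muP, muQ, pow_succ]

theorem muPQP_not_integral : ¬ IsIntegral ℂ (muP * muQ * muP) := by
  rintro ⟨f, hf, h0⟩
  change Polynomial.aeval _ f = 0 at h0
  have key : Polynomial.aeval (muC * muC) f = 0 := by
    have h1 : (Polynomial.aeval (muP * muQ * muP) f) 0 0 = 0 := by rw [h0]; rfl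
    rw [Polynomial.aeval_eq_sum_range] at h1 ⊢
    rw [← h1]
    let φ : MUAlg →+ C(Set.Icc (0:ℝ) 1, ℂ) :=
      { toFun := fun M => M 0 0, map_zero' := rfl, map_add' := fun _ _ => rfl }
    have hsum : ∀ s : Finset ℕ, φ (∑ k ∈ s, f.coeff k • (muP * muQ * muP) ^ k) =
        ∑ k ∈ s, φ (f.coeff k • (muP * muQ * muP) ^ k) := fun s => map_sum φ _ s
    refine Eq.trans ?_ (hsum (Finset.range (f.natDegree + 1))).symm
    refine Finset.sum_congr rfl fun k _ => ?_
    change _ = f.coeff k • ((muP * muQ * muP) ^ k) 0 0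
    rw [(muPQP_pow k).1]
  have hroot : ∀ t : Set.Icc (0:ℝ) 1, f.IsRoot (((t:ℝ):ℂ) * ((t:ℝ):ℂ)) := by
    intro t
    have h2 := DFunLike.congr_fun key t
    have h3 := Polynomial.aeval_algHom_apply (ContinuousMap.evalAlgHom ℂ ℂ t) (muC * muC) f
    rw [key, map_zero] at h3
    rw [Polynomial.IsRoot.def, ← Polynomial.coe_aeval_eq_eval]
    exact h3
  have hinj : Function.Injective (fun t : Set.Icc (0:ℝ) 1 => ((t:ℝ):ℂ) * ((t:ℝ):ℂ)) := by
    intro a b hab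
    have h' : (a:ℝ) * a = b * b := by
      have h2 : ((a:ℝ):ℂ) * ((a:ℝ):ℂ) = ((b:ℝ):ℂ) * ((b:ℝ):ℂ) := hab
      rw [← Complex.ofReal_mul, ← Complex.ofReal_mul] at h2
      exact Complex.ofReal_injective h2
    exact Subtype.ext ((mul_self_inj a.2.1 b.2.1).1 h')
  have hinf : Infinite (Set.Icc (0:ℝ) 1) := (Set.Icc_infinite (by norm_num)).to_subtype
  refine hf.ne_zero (Polynomial.eq_zero_of_infinite_isRoot f ?_)
  refine (Set.infinite_range_of_injective hinj).mono ?_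
  rintro _ ⟨t, rfl⟩
  exact hroot t

theorem mu_infdim {A : Type} [CStarAlgebra A] (X : Set A) (p q : A) (hp : p ∈ X) (hq : q ∈ X)
    (h : ¬ IsIntegral ℂ (p * q * p)) :
    ¬ FiniteDimensional ℂ ((StarAlgebra.adjoin ℂ X).topologicalClosure) := by
  intro hfin
  have hle := (StarAlgebra.adjoin ℂ X).le_topologicalClosure
  have hP := hle (StarAlgebra.subset_adjoin ℂ X hp)
  have hQ := hle (StarAlgebra.subset_adjoin ℂ X hq)
  have hx : p * q * p ∈ (StarAlgebra.adjoin ℂ X).topologicalClosure :=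
    mul_mem (mul_mem hP hQ) hP
  have hi : IsIntegral ℂ (⟨_, hx⟩ : (StarAlgebra.adjoin ℂ X).topologicalClosure) :=
    IsIntegral.of_finite ℂ _
  exact h (hi.map (StarAlgebra.adjoin ℂ X).topologicalClosure.subtype)

def muU (i j : ℕ) : MUAlg :=
  if i < 2 ∧ j < 2 then (if i = j then muP else 1 - muP)
  else if (2 ≤ i ∧ i < 4) ∧ (2 ≤ j ∧ j < 4) then (if i = j then muQ else 1 - muQ)
  else if i = j then 1 else 0

theorem muU_symm (i j : ℕ) : muU i j = muU j i := by
  unfold muU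
  simp only [and_comm, eq_comm]

theorem muU_proj (i j : ℕ) : star (muU i j) = muU i j ∧ muU i j * muU i j = muU i j := by
  unfold muU
  split_ifs <;> simp [mu_star_one, muP_star, muQ_star, muP_sq, muQ_sq, mul_sub, sub_mul]

theorem muU_rows (m : ℕ) (i : Fin (m + 4)) : ∑ j : Fin (m + 4), muU i j = 1 := by
  have hs : ∑ j : Fin (m + 4), muU i j =
      muU i 0 + (muU i 1 + (muU i 2 + (muU i 3 + ∑ j : Fin m, muU i (j + 4)))) := by
    simp [Fin.sum_univ_succ]
  rw [hs]
  obtain ⟨i, hi⟩ := i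
  simp only
  rcases lt_or_ge i 4 with h | h
  · have hz : ∑ j : Fin m, muU i (j + 4) = 0 := by
      refine Finset.sum_eq_zero fun j _ => ?_
      unfold muU
      rw [if_neg (by omega), if_neg (by omega), if_neg (by omega)]
    rw [hz]
    interval_cases i <;> simp [muU]
  · have hz : ∑ j : Fin m, muU i (j + 4) = 1 := by
      rw [Finset.sum_eq_single (⟨i - 4, by omega⟩ : Fin m)]
      · unfold muU
        rw [if_neg (by omega), if_neg (by omega), if_pos (by simp only; omega)]
      · intro j _ hj
        have : (j : ℕ) ≠ i - 4 := fun h => hj (Fin.ext h)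
        unfold muU
        rw [if_neg (by omega), if_neg (by omega), if_neg (by omega)]
      · simp
    rw [hz]
    have hk : ∀ k < 4, muU i k = 0 := by
      intro k hk
      unfold muU
      rw [if_neg (by omega), if_neg (by omega), if_neg (by omega)]
    simp [hk]

end

theorem exists_noncommutative_magic_unitary (n : ℕ) (hn : 4 ≤ n) :
    Nonempty (NoncommutativeMagicUnitaryWitness n) := by
  obtain ⟨m, rfl⟩ := Nat.exists_eq_add_of_le' hn
  refine ⟨{ A := MUAlg, u := fun i j => muU i j, proj := fun i j => muU_proj i j,
            rows := fun i => muU_rows m i, cols := ?_, noncomm := ?_, infdim := ?_ }⟩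
  · intro j
    rw [← muU_rows m j]
    exact Finset.sum_congr rfl fun i _ => muU_symm _ _
  · intro h
    have := h ⟨0, by omega⟩ ⟨0, by omega⟩ ⟨2, by omega⟩ ⟨2, by omega⟩
    exact muPQ_ne (by simpa [muU] using this)
  · refine mu_infdim _ muP muQ ?_ ?_ muPQP_not_integral
    · exact ⟨⟨0, by omega⟩, ⟨0, by omega⟩, by simp [muU]⟩
    · exact ⟨⟨2, by omega⟩, ⟨2, by omega⟩, by simp [muU]⟩
end

section
/- Let n ≥ 4 and m ≥ 1 be integers. For each noncrossing partition π of {1,…,m}, define the vector ξ_π ∈ ℂ^{({1,…,n}^m)} by ξ_π(i_1,…,i_m) = 1 if the tuple (i_1,…,i_m) is constant on every block of π, and ξ_π(i_1,…,i_m) = 0 otherwise. Then the family of vectors {ξ_π : π a noncrossing partition of {1,…,m}} is linearly independent over ℂ. -/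
/-- A partition of `{1, …, m}` (encoded as an equivalence relation on `Fin m`)
is noncrossing if there are no `a < b < c < d` with `a, c` in one block and
`b, d` in a different block. -/
def Setoid.IsNoncrossing {m : ℕ} (r : Setoid (Fin m)) : Prop :=
  ¬ ∃ a b c d : Fin m, a < b ∧ b < c ∧ c < d ∧
      r.r a c ∧ r.r b d ∧ ¬ r.r a b

open Classical in
/-- `1` if `j` is not the first element of its block. -/
noncomputable def ncS {m : ℕ} (r : Setoid (Fin m)) (j : Fin m) : ZMod 2 :=
  if ∃ x, x < j ∧ r.r x j then 1 else 0

open Classical in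
/-- `1` if `j` is not the last element of its block. -/
noncomputable def ncT {m : ℕ} (r : Setoid (Fin m)) (j : Fin m) : ZMod 2 :=
  if ∃ x, j < x ∧ r.r j x then 1 else 0

noncomputable def ncA {m : ℕ} (r : Setoid (Fin m)) (j : Fin m) : ZMod 2 := ncS r j + ncT r j

noncomputable def ncU {m : ℕ} (r : Setoid (Fin m)) (j : Fin m) : ZMod 2 :=
  ncS r j + ∑ i ∈ Finset.Iio j, ncA r i

open Classical in
/-- the digit of the path code at `j` -/
noncomputable def ncD {m : ℕ} (r : Setoid (Fin m)) (j : Fin m) : ℕ :=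
  (if ∃ x, x < j ∧ r.r x j then 0 else 2) + (if ∃ x, j < x ∧ r.r j x then 1 else 0)

def ncSat {m : ℕ} (r : Setoid (Fin m)) (S : Finset (Fin m)) : Prop :=
  ∀ x y, r.r x y → x ∈ S → y ∈ S

theorem nc_exists_last {m : ℕ} (r : Setoid (Fin m)) (j : Fin m) :
    ∃ l, r.r j l ∧ ∀ x, r.r j x → x ≤ l := by
  classical
  have hne : (Finset.univ.filter (fun x => r.r j x)).Nonempty :=
    ⟨j, by simpa using r.refl' j⟩
  obtain ⟨l, hl, hmax⟩ := Finset.exists_max_image _ id hne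
  simp at hl hmax
  exact ⟨l, hl, hmax⟩

theorem nc_exists_first {m : ℕ} (r : Setoid (Fin m)) (j : Fin m) :
    ∃ l, r.r j l ∧ ∀ x, r.r j x → l ≤ x := by
  classical
  have hne : (Finset.univ.filter (fun x => r.r j x)).Nonempty :=
    ⟨j, by simpa using r.refl' j⟩
  obtain ⟨l, hl, hmax⟩ := Finset.exists_min_image _ id hne
  simp at hl hmax
  exact ⟨l, hl, hmax⟩

theorem nc_exists_pred {m : ℕ} (r : Setoid (Fin m)) (j : Fin m) (h : ∃ x, x < j ∧ r.r x j) :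
    ∃ p, p < j ∧ r.r p j ∧ ∀ x, x < j → r.r x j → x ≤ p := by
  classical
  have hne : (Finset.univ.filter (fun x => x < j ∧ r.r x j)).Nonempty := by
    obtain ⟨x, hx⟩ := h
    exact ⟨x, by simpa using hx⟩
  obtain ⟨l, hl, hmax⟩ := Finset.exists_max_image _ id hne
  simp at hl hmax
  exact ⟨l, hl.1, hl.2, hmax⟩

theorem ncSat_sum {m : ℕ} (r : Setoid (Fin m)) (S : Finset (Fin m)) (hS : ncSat r S) :
    ∑ i ∈ S, ncA r i = 0 := by
  classical
  have h1 : ∀ i, ncA r i = (if ∃ x, x < i ∧ r.r x i then 0 else 1)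
      + (if ∃ x, i < x ∧ r.r i x then 0 else 1) := by
    intro i
    unfold ncA ncS ncT
    split_ifs <;> decide
  have h2 : (S.filter (fun i => ¬ ∃ x, x < i ∧ r.r x i)).card
      = (S.filter (fun i => ¬ ∃ x, i < x ∧ r.r i x)).card := by
    choose L hL1 hL2 using nc_exists_last r
    choose F hF1 hF2 using nc_exists_first r
    refine Finset.card_nbij' L F ?_ ?_ ?_ ?_
    · intro i hi
      simp only [Finset.coe_filter, Set.mem_ofPred_eq] at hi ⊢
      refine ⟨hS _ _ (hL1 i) hi.1, ?_⟩
      rintro ⟨x, hx, hx'⟩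
      exact absurd (hL2 i x (r.trans' (hL1 i) hx')) (not_le.2 hx)
    · intro i hi
      simp only [Finset.coe_filter, Set.mem_ofPred_eq] at hi ⊢
      refine ⟨hS _ _ (hF1 i) hi.1, ?_⟩
      rintro ⟨x, hx, hx'⟩
      exact absurd (hF2 i x (r.trans' (hF1 i) (r.symm' hx'))) (not_le.2 hx)
    · intro i hi
      simp only [Finset.coe_filter, Set.mem_ofPred_eq] at hi
      have h3 : r.r i (F (L i)) := r.trans' (hL1 i) (hF1 _)
      have h4 : F (L i) ≤ i := hF2 _ _ (r.symm' (hL1 i))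
      by_contra hne
      exact hi.2 ⟨_, lt_of_le_of_ne h4 hne, r.symm' h3⟩
    · intro i hi
      simp only [Finset.coe_filter, Set.mem_ofPred_eq] at hi
      have h3 : r.r i (L (F i)) := r.trans' (hF1 i) (hL1 _)
      have h4 : i ≤ L (F i) := hL2 _ _ (r.symm' (hF1 i))
      by_contra hne
      exact hi.2 ⟨_, lt_of_le_of_ne h4 (Ne.symm hne), h3⟩
  have h3 : ∀ (P : Fin m → Prop) [DecidablePred P], ∑ i ∈ S, (if P i then (0 : ZMod 2) else 1)
      = ((S.filter (fun i => ¬ P i)).card : ZMod 2) := by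
    intro P _
    rw [Finset.card_filter]
    push_cast
    refine Finset.sum_congr rfl fun i _ => ?_
    by_cases hP : P i <;> simp [hP]
  rw [Finset.sum_congr rfl (fun i _ => h1 i), Finset.sum_add_distrib, h3, h3, h2]
  exact CharTwo.add_self_eq_zero _

/-- The open interval between an element and its predecessor is saturated. -/
theorem ncSat_Ioo {m : ℕ} (r : Setoid (Fin m)) (hr : r.IsNoncrossing) (p k : Fin m)
    (h2 : r.r p k) (h3 : ∀ x, x < k → r.r x k → x ≤ p) :
    ncSat r (Finset.Ioo p k) := by
  intro x y hxy hx
  rw [Finset.mem_Ioo] at hx ⊢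
  have hxk : ¬ r.r x k := fun h => absurd (h3 x hx.2 h) (not_le.2 hx.1)
  have hxp : ¬ r.r x p := fun h => hxk (r.trans' h h2)
  constructor
  · by_contra hy
    rcases lt_or_eq_of_le (not_lt.1 hy) with hy | hy
    · exact hr ⟨y, p, x, k, hy, hx.1, hx.2, r.symm' hxy, h2, fun h => hxp (r.trans' hxy h)⟩
    · exact hxp (hy ▸ hxy)
  · by_contra hy
    rcases lt_or_eq_of_le (not_lt.1 hy) with hy | hy
    · exact hr ⟨p, x, k, y, hx.1, hx.2, hy, h2, hxy, fun h => hxp (r.symm' h)⟩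
    · exact hxk (hy ▸ hxy)

theorem ncSat_Icc {m : ℕ} (r : Setoid (Fin m)) (hr : r.IsNoncrossing) (f l : Fin m)
    (h : r.r f l) (hf : ∀ x, r.r f x → f ≤ x) (hl : ∀ x, r.r f x → x ≤ l) :
    ncSat r (Finset.Icc f l) := by
  intro x y hxy hx
  rw [Finset.mem_Icc] at hx ⊢
  by_cases hfx : r.r f x
  · exact ⟨hf _ (r.trans' hfx hxy), hl _ (r.trans' hfx hxy)⟩
  have h1 : f < x := lt_of_le_of_ne hx.1 (fun e => hfx (e ▸ r.refl' f))
  have h2 : x < l := lt_of_le_of_ne hx.2 (fun e => hfx (e ▸ h))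
  constructor
  · by_contra hy
    exact hr ⟨y, f, x, l, not_le.1 hy, h1, h2, r.symm' hxy, h,
      fun h' => hfx (r.symm' (r.trans' hxy h'))⟩
  · by_contra hy
    exact hr ⟨f, x, l, y, h1, h2, not_le.1 hy, h, hxy, hfx⟩

theorem nc_sum_Iio_split {m : ℕ} (a : Fin m → ZMod 2) (p k : Fin m) (h : p < k) :
    ∑ i ∈ Finset.Iio k, a i
      = ∑ i ∈ Finset.Iio p, a i + a p + ∑ i ∈ Finset.Ioo p k, a i := by
  have e : Finset.Iio k = (insert p (Finset.Iio p)) ∪ Finset.Ioo p k := by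
    ext x; simp only [Finset.mem_Iio, Finset.mem_union, Finset.mem_insert, Finset.mem_Ioo]; omega
  rw [e, Finset.sum_union, Finset.sum_insert (by simp)]
  · ring
  · rw [Finset.disjoint_left]
    intro x
    simp only [Finset.mem_Iio, Finset.mem_insert, Finset.mem_Ioo]; omega

theorem nc_sum_Icc_split {m : ℕ} (a : Fin m → ZMod 2) (f l : Fin m) (h : f ≤ l) :
    ∑ i ∈ Finset.Iio l, a i + a l
      = ∑ i ∈ Finset.Iio f, a i + ∑ i ∈ Finset.Icc f l, a i := by
  have e : insert l (Finset.Iio l) = Finset.Iio f ∪ Finset.Icc f l := by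
    ext x; simp only [Finset.mem_Iio, Finset.mem_union, Finset.mem_insert, Finset.mem_Icc]; omega
  have e2 : ∑ i ∈ insert l (Finset.Iio l), a i = ∑ i ∈ Finset.Iio f ∪ Finset.Icc f l, a i := by
    rw [e]
  rw [Finset.sum_union, Finset.sum_insert (by simp)] at e2
  · rw [← e2]; ring
  · rw [Finset.disjoint_left]
    intro x
    simp only [Finset.mem_Iio, Finset.mem_Icc]; omega

/-- `ncU` is constant on blocks. -/
theorem ncU_const {m : ℕ} (r : Setoid (Fin m)) (hr : r.IsNoncrossing) :
    ∀ x y, r.r x y → ncU r x = ncU r y := by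
  have key : ∀ k : Fin m, ∀ x, x < k → r.r x k → ncU r x = ncU r k := by
    intro k
    induction k using WellFoundedLT.induction with
    | ind k ih =>
      intro x hx hxk
      obtain ⟨p, h1, h2, h3⟩ := nc_exists_pred r k ⟨x, hx, hxk⟩
      have hpk : ncU r p = ncU r k := by
        have e := nc_sum_Iio_split (ncA r) p k h1
        rw [ncSat_sum r _ (ncSat_Ioo r hr p k h2 h3)] at e
        have s1 : ncS r k = 1 := by unfold ncS; rw [if_pos ⟨p, h1, h2⟩]
        have t1 : ncT r p = 1 := by unfold ncT; rw [if_pos ⟨k, h1, h2⟩]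
        have a1 : ncA r p = ncS r p + 1 := by unfold ncA; rw [t1]
        unfold ncU
        rw [e, s1, a1]
        generalize ncS r p = s
        generalize ∑ i ∈ Finset.Iio p, ncA r i = q
        revert s q
        decide
      rcases lt_or_eq_of_le (h3 x hx hxk) with h | h
      · rw [ih p h1 x h (r.trans' hxk (r.symm' h2)), hpk]
      · rw [h, hpk]
  intro x y hxy
  rcases lt_trichotomy x y with h | h | h
  · exact key y x h hxy
  · rw [h]
  · exact (key x y h (r.symm' hxy)).symm

theorem nc_nf_iff {m : ℕ} {r q : Setoid (Fin m)} {j : Fin m} (h : ncD r j = ncD q j) :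
    ((∃ x, x < j ∧ r.r x j) ↔ (∃ x, x < j ∧ q.r x j)) ∧
    ((∃ x, j < x ∧ r.r j x) ↔ (∃ x, j < x ∧ q.r j x)) := by
  unfold ncD at h
  by_cases c1 : ∃ x, x < j ∧ r.r x j <;> by_cases c2 : ∃ x, x < j ∧ q.r x j <;>
    by_cases c3 : ∃ x, j < x ∧ r.r j x <;> by_cases c4 : ∃ x, j < x ∧ q.r j x <;>
    first
    | exact ⟨iff_of_true c1 c2, iff_of_true c3 c4⟩
    | exact ⟨iff_of_true c1 c2, iff_of_false c3 c4⟩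
    | exact ⟨iff_of_false c1 c2, iff_of_true c3 c4⟩
    | exact ⟨iff_of_false c1 c2, iff_of_false c3 c4⟩
    | (exfalso
       simp only [c1, c2, c3, c4, if_true, if_false] at h
       omega)

theorem nc_agree_aux {m : ℕ} (r q : Setoid (Fin m)) (hr : r.IsNoncrossing) (k : Fin m)
    (hd : ∀ j, j < k → ncD r j = ncD q j)
    (hag : ∀ x y, x < k → y < k → (r.r x y ↔ q.r x y))
    (p p' : Fin m) (h1 : p < k) (h2 : r.r p k) (h3 : ∀ x, x < k → r.r x k → x ≤ p)
    (h1' : p' < k) (h2' : q.r p' k) (h3' : ∀ x, x < k → q.r x k → x ≤ p') : p' ≤ p := by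
  by_contra hlt
  have hlt : p < p' := not_le.1 hlt
  obtain ⟨z, hz, hz'⟩ := (nc_nf_iff (hd p' h1')).2.2 ⟨k, h1', h2'⟩
  have hs := ncSat_Ioo r hr p k h2 h3 p' z hz' (Finset.mem_Ioo.2 ⟨hlt, h1'⟩)
  rw [Finset.mem_Ioo] at hs
  have hq := (hag p' z h1' hs.2).1 hz'
  exact absurd (h3' z hs.2 (q.trans' (q.symm' hq) h2')) (not_le.2 hz)

theorem nc_agree {m : ℕ} (r q : Setoid (Fin m)) (hr : r.IsNoncrossing) (hq : q.IsNoncrossing)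
    (hd : ∀ j, ncD r j = ncD q j) : r = q := by
  have key : ∀ k : Fin m, ∀ x, x < k → (r.r x k ↔ q.r x k) := by
    intro k
    induction k using WellFoundedLT.induction with
    | ind k ih =>
      have hag : ∀ x y, x < k → y < k → (r.r x y ↔ q.r x y) := by
        intro x y hx hy
        rcases lt_trichotomy x y with h | h | h
        · exact ih y hy x h
        · subst h; exact ⟨fun _ => q.refl' x, fun _ => r.refl' x⟩
        · have := ih x hx y h
          exact ⟨fun h => q.symm' (this.1 (r.symm' h)), fun h => r.symm' (this.2 (q.symm' h))⟩
      intro x hx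
      by_cases hn : ∃ x, x < k ∧ r.r x k
      · have hn' := (nc_nf_iff (hd k)).1.1 hn
        obtain ⟨p, h1, h2, h3⟩ := nc_exists_pred r k hn
        obtain ⟨p', h1', h2', h3'⟩ := nc_exists_pred q k hn'
        have e1 := nc_agree_aux r q hr k (fun j _ => hd j) hag p p' h1 h2 h3 h1' h2' h3'
        have e2 := nc_agree_aux q r hq k (fun j _ => (hd j).symm)
          (fun x y hx hy => (hag x y hx hy).symm) p' p h1' h2' h3' h1 h2 h3
        have e := le_antisymm e1 e2
        subst e
        constructor
        · intro h
          exact q.trans' ((hag _ _ hx h1).1 (r.trans' h (r.symm' h2))) h2'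
        · intro h
          exact r.trans' ((hag _ _ hx h1).2 (q.trans' h (q.symm' h2'))) h2
      · have hn' := fun h => hn ((nc_nf_iff (hd k)).1.2 h)
        exact ⟨fun h => absurd ⟨x, hx, h⟩ hn, fun h => absurd ⟨x, hx, h⟩ hn'⟩
  ext x y
  change r.r x y ↔ q.r x y
  rcases lt_trichotomy x y with h | h | h
  · exact key y x h
  · subst h; exact ⟨fun _ => q.refl' x, fun _ => r.refl' x⟩
  · have := key x y h
    exact ⟨fun h => q.symm' (this.1 (r.symm' h)), fun h => r.symm' (this.2 (q.symm' h))⟩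

/-- Triangularity: `r` is paired against the data of `q`. -/
theorem nc_triangular {m : ℕ} (r q : Setoid (Fin m)) (hr : r.IsNoncrossing)
    (hq : q.IsNoncrossing)
    (hA : ∀ S, ncSat r S → ∑ i ∈ S, ncA q i = 0)
    (hU : ∀ x y, r.r x y → ncU q x = ncU q y) (hne : r ≠ q) :
    toLex (ncD q) < toLex (ncD r) := by
  have hex : ∃ j, ncD r j ≠ ncD q j := by
    by_contra h
    push Not at h
    exact hne (nc_agree r q hr hq h)
  obtain ⟨k, hk, hmin⟩ := WellFounded.has_min (wellFounded_lt (α := Fin m))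
    {j | ncD r j ≠ ncD q j} hex
  have hlt : ∀ j, j < k → ncD r j = ncD q j := by
    intro j hj
    by_contra h
    exact hmin j h hj
  refine ⟨k, fun j hj => (hlt j hj).symm, ?_⟩
  have hI : (∃ x, x < k ∧ r.r x k) → (∃ x, x < k ∧ q.r x k) := by
    intro h
    obtain ⟨p, h1, h2, h3⟩ := nc_exists_pred r k h
    have e := nc_sum_Iio_split (ncA q) p k h1
    rw [hA _ (ncSat_Ioo r hr p k h2 h3)] at e
    have hu := hU _ _ h2
    have t1 : ncT q p = 1 := by
      unfold ncT; rw [if_pos ((nc_nf_iff (hlt p h1)).2.1 ⟨k, h1, h2⟩)]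
    have a1 : ncA q p = ncS q p + 1 := by unfold ncA; rw [t1]
    unfold ncU at hu
    rw [e, a1] at hu
    have s1 : ncS q k = 1 := by
      revert hu
      generalize ncS q p = s
      generalize ncS q k = s'
      generalize ∑ i ∈ Finset.Iio p, ncA q i = b
      revert s s' b
      decide
    unfold ncS at s1
    by_contra hc
    rw [if_neg hc] at s1
    exact absurd s1 (by decide)
  have hII : ((∃ x, x < k ∧ r.r x k) ↔ (∃ x, x < k ∧ q.r x k)) →
      (∃ x, k < x ∧ q.r k x) → (∃ x, k < x ∧ r.r k x) := by
    intro hiff hqk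
    by_contra hc
    obtain ⟨f, hf1, hf2⟩ := nc_exists_first r k
    have hfk : f ≤ k := hf2 k (r.refl' k)
    have hl : ∀ x, r.r f x → x ≤ k := by
      intro x hx
      by_contra h
      exact hc ⟨x, not_le.1 h, r.trans' hf1 hx⟩
    have hsat := ncSat_Icc r hr f k (r.symm' hf1) (fun x hx => hf2 x (r.trans' hf1 hx)) hl
    have e := nc_sum_Icc_split (ncA q) f k hfk
    rw [hA _ hsat] at e
    have hrf : ¬ ∃ x, x < f ∧ r.r x f := by
      rintro ⟨x, hx, hx'⟩
      exact absurd (hf2 x (r.trans' hf1 (r.symm' hx'))) (not_le.2 hx)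
    have hqf : ¬ ∃ x, x < f ∧ q.r x f := by
      rcases lt_or_eq_of_le hfk with h | h
      · exact fun h' => hrf ((nc_nf_iff (hlt f h)).1.2 h')
      · subst h; exact fun h' => hrf (hiff.2 h')
    have sf : ncS q f = 0 := by unfold ncS; rw [if_neg hqf]
    have tk : ncT q k = 1 := by unfold ncT; rw [if_pos hqk]
    have hu := hU _ _ hf1
    have ak : ncA q k = ncS q k + 1 := by unfold ncA; rw [tk]
    unfold ncU at hu
    rw [ak] at e
    rw [sf] at hu
    revert hu e
    generalize ncS q k = s'
    generalize ∑ i ∈ Finset.Iio f, ncA q i = b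
    generalize ∑ i ∈ Finset.Iio k, ncA q i = b'
    revert s' b b'
    decide
  have hk' : ncD r k ≠ ncD q k := hk
  change ncD q k < ncD r k
  unfold ncD at hk' ⊢
  by_cases c1 : ∃ x, x < k ∧ r.r x k
  · have c2 := hI c1
    have h3 := hII ⟨fun _ => c2, fun _ => c1⟩
    by_cases c3 : ∃ x, k < x ∧ q.r k x
    · have c4 := h3 c3
      rw [if_pos c1, if_pos c2, if_pos c3, if_pos c4] at hk'
      exact absurd rfl hk'
    · by_cases c4 : ∃ x, k < x ∧ r.r k x
      · rw [if_pos c1, if_pos c2, if_neg c3, if_pos c4]; norm_num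
      · rw [if_pos c1, if_pos c2, if_neg c3, if_neg c4] at hk'
        exact absurd rfl hk'
  · by_cases c2 : ∃ x, x < k ∧ q.r x k
    · rw [if_neg c1, if_pos c2]
      split_ifs <;> norm_num
    · have h3 := hII ⟨fun h => absurd h c1, fun h => absurd h c2⟩
      by_cases c3 : ∃ x, k < x ∧ q.r k x
      · have c4 := h3 c3
        rw [if_neg c1, if_neg c2, if_pos c3, if_pos c4] at hk'
        exact absurd rfl hk'
      · by_cases c4 : ∃ x, k < x ∧ r.r k x
        · rw [if_neg c1, if_neg c2, if_neg c3, if_pos c4]; norm_num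
        · rw [if_neg c1, if_neg c2, if_neg c3, if_neg c4] at hk'
          exact absurd rfl hk'

def ncChi (x : ZMod 2) : ℂ := if x = 0 then 1 else -1

theorem ncChi_add_one (x : ZMod 2) : ncChi (x + 1) = - ncChi x := by
  have h : x = 0 ∨ x = 1 := by revert x; decide
  have h2 : (1 : ZMod 2) + 1 = 0 := by decide
  rcases h with rfl | rfl <;> simp [ncChi, h2]

/-- The functional attached to `q`. -/
noncomputable def ncL {m n : ℕ} (φ : ZMod 2 × ZMod 2 → Fin n) (q : Setoid (Fin m))
    (F : (Fin m → Fin n) → ℂ) : ℂ :=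
  ∑ v : Fin m → ZMod 2, ncChi (∑ j, ncA q j * v j) * F (fun j => φ (v j, ncU q j))

open Classical in
noncomputable def ncXi {m : ℕ} (n : ℕ) (r : Setoid (Fin m)) : (Fin m → Fin n) → ℂ :=
  fun i => if ∀ x y : Fin m, r.r x y → i x = i y then (1 : ℂ) else 0

theorem ncXi_apply {m n : ℕ} (φ : ZMod 2 × ZMod 2 → Fin n) (hφ : Function.Injective φ)
    (r : Setoid (Fin m)) (v u : Fin m → ZMod 2) [Decidable (∀ x y, r.r x y → v x = v y ∧ u x = u y)] :
    ncXi n r (fun j => φ (v j, u j))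
      = if ∀ x y, r.r x y → v x = v y ∧ u x = u y then 1 else 0 := by
  unfold ncXi
  simp only [hφ.eq_iff, Prod.mk.injEq]

theorem ncL_flip {m n : ℕ} (φ : ZMod 2 × ZMod 2 → Fin n) (hφ : Function.Injective φ)
    (r q : Setoid (Fin m)) (S : Finset (Fin m)) (hS : ncSat r S)
    (h : ncL φ q (ncXi n r) ≠ 0) : ∑ i ∈ S, ncA q i = 0 := by
  classical
  by_contra hc
  have h1 : ∑ i ∈ S, ncA q i = 1 := by
    revert hc; generalize ∑ i ∈ S, ncA q i = x; revert x; decide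
  apply h
  have hneg : ncL φ q (ncXi n r) = - ncL φ q (ncXi n r) := by
    conv_lhs => unfold ncL
    rw [← Equiv.sum_comp (Equiv.addRight (fun j => if j ∈ S then (1 : ZMod 2) else 0))]
    unfold ncL
    rw [← Finset.sum_neg_distrib]
    refine Finset.sum_congr rfl fun v _ => ?_
    have e1 : ∑ j, ncA q j * (v j + if j ∈ S then (1 : ZMod 2) else 0)
        = ∑ j, ncA q j * v j + 1 := by
      simp only [mul_add, Finset.sum_add_distrib, mul_ite, mul_one, mul_zero]
      rw [← h1]
      simp
    simp only [Equiv.coe_addRight, Pi.add_apply]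
    rw [e1, ncChi_add_one, neg_mul]
    congr 2
    rw [ncXi_apply φ hφ r (fun j => v j + if j ∈ S then (1 : ZMod 2) else 0) (ncU q),
      ncXi_apply φ hφ r v (ncU q)]
    congr 1
    apply propext
    refine forall_congr' fun x => forall_congr' fun y => forall_congr' fun hxy => ?_
    have : x ∈ S ↔ y ∈ S := ⟨hS x y hxy, hS y x (r.symm' hxy)⟩
    simp only [this, add_left_inj]
  have : (2 : ℂ) * ncL φ q (ncXi n r) = 0 := by linear_combination hneg
  simpa using this

theorem ncL_U {m n : ℕ} (φ : ZMod 2 × ZMod 2 → Fin n) (hφ : Function.Injective φ)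
    (r q : Setoid (Fin m)) (h : ncL φ q (ncXi n r) ≠ 0) :
    ∀ x y, r.r x y → ncU q x = ncU q y := by
  classical
  obtain ⟨v, -, hv⟩ := Finset.exists_ne_zero_of_sum_ne_zero h
  rw [ncXi_apply φ hφ r v (ncU q)] at hv
  intro x y hxy
  by_contra hc
  apply hv
  rw [if_neg (fun h => hc (h x y hxy).2), mul_zero]

theorem ncL_diag {m n : ℕ} (φ : ZMod 2 × ZMod 2 → Fin n) (hφ : Function.Injective φ)
    (q : Setoid (Fin m)) (hq : q.IsNoncrossing) : ncL φ q (ncXi n q) ≠ 0 := by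
  classical
  have e : ncL φ q (ncXi n q)
      = ∑ v : Fin m → ZMod 2, if ∀ x y, q.r x y → v x = v y then (1 : ℂ) else 0 := by
    unfold ncL
    refine Finset.sum_congr rfl fun v _ => ?_
    rw [ncXi_apply φ hφ q v (ncU q)]
    by_cases hv : ∀ x y, q.r x y → v x = v y
    · rw [if_pos hv, if_pos (fun x y h => ⟨hv x y h, ncU_const q hq x y h⟩), mul_one]
      have e1 : ∑ j, ncA q j * v j = ∑ j ∈ Finset.univ.filter (fun j => v j = 1), ncA q j := by
        rw [Finset.sum_filter]
        refine Finset.sum_congr rfl fun j _ => ?_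
        generalize ncA q j = a
        generalize v j = b
        revert a b
        decide
      rw [e1, ncSat_sum q]
      · simp [ncChi]
      · intro x y hxy hx
        simp only [Finset.mem_filter, Finset.mem_univ, true_and] at hx ⊢
        rw [← hv x y hxy, hx]
    · rw [if_neg hv, if_neg (fun h => hv fun x y hxy => (h x y hxy).1), mul_zero]
  rw [e, Finset.sum_boole, Nat.cast_ne_zero, ← Nat.pos_iff_ne_zero, Finset.card_pos]
  exact ⟨0, by simp⟩

open Classical in
/-- for `n ≥ 4`, the vectors `ξ_π ∈ ℂ^{({1,…,n}^m)}` associated to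
noncrossing partitions `π` of `{1, …, m}` — where `ξ_π(i) = 1` if `i` is constant
on every block of `π` and `0` otherwise — are linearly independent over `ℂ`. -/
theorem noncrossing_partition_vectors_linearIndependent (n m : ℕ) (hn : 4 ≤ n) (hm : 1 ≤ m) :
    LinearIndependent ℂ
      (fun (π : {r : Setoid (Fin m) // r.IsNoncrossing}) =>
        (fun i : Fin m → Fin n =>
          if ∀ x y : Fin m, π.1.r x y → i x = i y then (1 : ℂ) else 0)) := by
  change LinearIndependent ℂ
      (fun (π : {r : Setoid (Fin m) // r.IsNoncrossing}) => ncXi n π.1)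
  obtain ⟨φ⟩ : Nonempty (ZMod 2 × ZMod 2 ↪ Fin n) := by
    apply Function.Embedding.nonempty_of_card_le
    simpa [ZMod.card] using hn
  rw [linearIndependent_iff']
  intro s g hg
  by_contra hc
  push Not at hc
  obtain ⟨π₀, hπ₀, hg₀⟩ := hc
  obtain ⟨q, hqs, hmax⟩ := Finset.exists_max_image (s.filter (fun π => g π ≠ 0))
    (fun π => toLex (ncD π.1)) ⟨π₀, by simp [hπ₀, hg₀]⟩
  rw [Finset.mem_filter] at hqs
  have hL : ∑ π ∈ s, g π * ncL φ q.1 (ncXi n π.1) = 0 := by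
    have h0 : ncL φ q.1 (∑ π ∈ s, g π • ncXi n π.1) = 0 := by
      rw [hg]; simp [ncL]
    rw [← h0]
    unfold ncL
    simp only [Finset.sum_apply, Pi.smul_apply, smul_eq_mul, Finset.mul_sum]
    rw [Finset.sum_comm]
    refine Finset.sum_congr rfl fun v _ => Finset.sum_congr rfl fun π _ => ?_
    ring
  rw [Finset.sum_eq_single_of_mem q hqs.1] at hL
  · rcases mul_eq_zero.1 hL with h | h
    · exact hqs.2 h
    · exact ncL_diag φ φ.injective q.1 q.2 h
  · intro π hπ hne
    by_cases hgπ : g π = 0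
    · rw [hgπ, zero_mul]
    by_contra hcon
    have hLne : ncL φ q.1 (ncXi n π.1) ≠ 0 := fun h => hcon (by rw [h, mul_zero])
    have hlt := nc_triangular π.1 q.1 π.2 q.2
      (fun S hS => ncL_flip φ φ.injective π.1 q.1 S hS hLne)
      (ncL_U φ φ.injective π.1 q.1 hLne) (fun h => hne (Subtype.ext h))
    exact absurd (hmax π (by simp [hπ, hgπ])) (not_le.2 hlt)
end
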